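/- Let g be a finite-dimensional real vector space with a bilinear bracket [·,·] satisfying the left Leibniz identity [x,[y,z]] = [[x,y],z] + [y,[x,z]] for all x,y,z ∈ g, and let ad(x) ∈ End(g) denote the linear map y ↦ [x,y]. Define x∘y := exp(ad(x)) y, where exp is the exponential of linear endomorphisms. Then for all x,y,z ∈ g: x∘(y∘z) = (x∘y)∘(x∘z), 0∘x = x, and x∘0 = 0; that is, (g,∘,0) is a pointed rack. -/

import Mathlib

/-!
The exponential of a derivation is an automorphism: if `D` satisfies the Leibniz rule for a
bilinear map `B`, then `t ↦ B (exp (tD) x) (exp (tD) y)` solves the linear equation `u' = D u`,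
whose only solution with initial value `B x y` is `exp (tD) (B x y)`. The Leibniz identity says
that `ad x` is a derivation of the bracket, so `T = exp (ad x)` satisfies `T ∘ ad y = ad (T y) ∘ T`.
Exponentiating this intertwining relation gives `T ∘ exp (ad y) = exp (ad (T y)) ∘ T`, which is
left self-distributivity.
-/

section BanachSpace

open NormedSpace

variable {𝕜 E F G : Type*} [RCLike 𝕜]
  [NormedAddCommGroup E] [NormedSpace 𝕜 E] [CompleteSpace E]
  [NormedAddCommGroup F] [NormedSpace 𝕜 F] [CompleteSpace F]
  [NormedAddCommGroup G] [NormedSpace 𝕜 G] [CompleteSpace G]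

theorem bijective_exp (A : E →L[𝕜] E) : Function.Bijective (exp A : E →L[𝕜] E) := by
  let _ : NormedAlgebra ℚ (E →L[𝕜] E) := .restrictScalars ℚ 𝕜 _
  exact ContinuousLinearMap.isUnit_iff_bijective.mp (isUnit_exp A)

theorem hasDerivAt_exp_smul_apply (A : E →L[𝕜] E) (x : E) (t : 𝕜) :
    HasDerivAt (fun s : 𝕜 => exp (s • A) x) (A (exp (t • A) x)) t := by
  simpa using (hasDerivAt_exp_smul_const' A t).clm_apply (hasDerivAt_const t x)

theorem eq_exp_smul_apply_of_hasDerivAt {A : E →L[𝕜] E} {u : 𝕜 → E}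
    (hu : ∀ t, HasDerivAt u (A (u t)) t) (t : 𝕜) : u t = exp (t • A) (u 0) := by
  have hderiv (s : 𝕜) : HasDerivAt (fun r : 𝕜 => exp (r • -A) (u r)) 0 s := by
    simpa using (hasDerivAt_exp_smul_const (-A) s).clm_apply (hu s)
  have hconst : exp (t • -A) (u t) = u 0 := by
    simpa using is_const_of_deriv_eq_zero (fun s => (hderiv s).differentiableAt)
      (fun s => (hderiv s).deriv) t 0
  let _ : NormedAlgebra ℚ (E →L[𝕜] E) := .restrictScalars ℚ 𝕜 _
  have hinv : exp (t • A) * exp (t • -A) = 1 := by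
    rw [smul_neg, ← exp_add_of_commute (Commute.refl (t • A)).neg_right, add_neg_cancel, exp_zero]
  calc u t = (exp (t • A) * exp (t • -A)) (u t) := by rw [hinv, one_apply_eq_self]
    _ = exp (t • A) (u 0) := by rw [mul_apply_eq_comp, hconst]

theorem exp_apply_bilinear_of_leibniz (B : E →L[𝕜] F →L[𝕜] G)
    {D₁ : E →L[𝕜] E} {D₂ : F →L[𝕜] F} {D : G →L[𝕜] G}
    (leibniz : ∀ x y, D (B x y) = B (D₁ x) y + B x (D₂ y)) (x : E) (y : F) :
    exp D (B x y) = B (exp D₁ x) (exp D₂ y) := by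
  have hderiv (t : 𝕜) : HasDerivAt (fun s : 𝕜 => B (exp (s • D₁) x) (exp (s • D₂) y))
      (D (B (exp (t • D₁) x) (exp (t • D₂) y))) t := by
    rw [leibniz, add_comm]
    exact B.hasDerivAt_of_bilinear (fun _ => hasDerivAt_exp_smul_apply D₁ x t)
      (fun _ => hasDerivAt_exp_smul_apply D₂ y t)
  simpa using (eq_exp_smul_apply_of_hasDerivAt hderiv 1).symm

theorem leibniz_exp_rack_general (bracket : E →L[𝕜] E →L[𝕜] E)
    (leibniz : ∀ x y z : E,
      bracket x (bracket y z) = bracket (bracket x y) z + bracket y (bracket x z)) :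
    (∀ x y z : E, exp (bracket x) (exp (bracket y) z) =
      exp (bracket (exp (bracket x) y)) (exp (bracket x) z)) ∧
    (∀ x : E, exp (bracket 0) x = x) ∧
    (∀ x : E, exp (bracket x) 0 = 0) ∧
    (∀ x : E, Function.Bijective (exp (bracket x) : E →L[𝕜] E)) := by
  refine ⟨fun x y z => ?_, fun x => by simp, fun x => map_zero _,
    fun x => bijective_exp (bracket x)⟩
  have hsemiconj : SemiconjBy (exp (bracket x)) (bracket y) (bracket (exp (bracket x) y)) :=
    ContinuousLinearMap.ext fun w => exp_apply_bilinear_of_leibniz bracket (leibniz x) y w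
  let _ : NormedAlgebra ℚ (E →L[𝕜] E) := .restrictScalars ℚ 𝕜 _
  exact DFunLike.congr_fun hsemiconj.exp_right z

end BanachSpace

/-- Let `g` be a finite-dimensional real vector space with a bilinear
bracket satisfying the left Leibniz identity, and let `ad x : y ↦ [x,y]`. Then
`x ∘ y := exp(ad x) y` makes `(g, ∘, 0)` a pointed rack: `∘` is left self-distributive,
each left translation is a bijection, and `0 ∘ x = x`, `x ∘ 0 = 0`. -/
theorem leibniz_exp_rack {g : Type*} [NormedAddCommGroup g] [NormedSpace ℝ g]
    [FiniteDimensional ℝ g] (bracket : g →ₗ[ℝ] g →ₗ[ℝ] g)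
    (leibniz : ∀ x y z : g,
      bracket x (bracket y z) = bracket (bracket x y) z + bracket y (bracket x z)) :
    (∀ x y z : g,
      (fun a b : g =>
          NormedSpace.exp (LinearMap.toContinuousLinearMap (bracket a)) b) x
        ((fun a b : g =>
          NormedSpace.exp (LinearMap.toContinuousLinearMap (bracket a)) b) y z)
      = (fun a b : g =>
          NormedSpace.exp (LinearMap.toContinuousLinearMap (bracket a)) b)
          ((fun a b : g =>
            NormedSpace.exp (LinearMap.toContinuousLinearMap (bracket a)) b) x y)
          ((fun a b : g =>
            NormedSpace.exp (LinearMap.toContinuousLinearMap (bracket a)) b) x z)) ∧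
    (∀ x : g,
      NormedSpace.exp (LinearMap.toContinuousLinearMap (bracket (0 : g))) x = x) ∧
    (∀ x : g,
      NormedSpace.exp (LinearMap.toContinuousLinearMap (bracket x)) (0 : g) = 0) ∧
    (∀ x : g, Function.Bijective
      (fun y : g => NormedSpace.exp (LinearMap.toContinuousLinearMap (bracket x)) y)) := by
  have : CompleteSpace g := FiniteDimensional.complete ℝ g
  exact leibniz_exp_rack_general bracket.toContinuousBilinearMap leibniz
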